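/- arXiv:2206.04408 — 2 statements merged into one kernel-verified Lean document; each statement's English description precedes it below -/
import Mathlib

section
/- Let P be a preference function of span s (0 ≤ s < n) over the alphabet A = {0,1,…,q−1} and let I = (I_1,…,I_n) be an arbitrary initial n-word. Then the greedy construction (P,I) halts after finitely many steps, every n-word occurs at most once as a contiguous window of (P,I), and the last n−1 terms of (P,I) are exactly (I_1,…,I_{n−1}). -/
/-!
The argument rests on the invariant `WindowsDistinct`: the `n`-windows at different positions are
different words. A greedy step preserves it (`WindowsDistinct.step`), because the only new window
is required to be new. As there are only `q ^ n` words of length `n`, the invariant bounds the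
length (`WindowsDistinct.length_le`), so the construction halts within `q ^ n` steps.

Suppose the construction has halted at `l`, and let `v` be the last `n - 1` terms of `l`. Since the
preferences at each `s`-word exhaust the alphabet, every word `v c` occurs in `l`; so `v` occurs at
`q` positions that are followed by a letter, and once more at the end. If none of these `q + 1`
occurrences were at the start of `l`, each would be preceded by a letter `b`, and the windows `b v`
would be `q + 1` distinct words determined by their first letter, which is impossible. Hence `v` is
the prefix of `l` of length `n - 1`, that is, of `I` (`suffix_of_halted`).
-/


namespace PaperDB

/-- The last `s` entries of `l`. -/
def lastN {α : Type*} (s : ℕ) (l : List α) : List α := l.drop (l.length - s)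

/-- The digit appended by the greedy rule, if any: the most preferred digit `c`
(according to the preference function `P`, evaluated at the last `s` digits,
`P x 0` being the most preferred digit) such that the `n`-window created by
appending `c` has not yet occurred as a contiguous subword. -/
def nextDigit (q s n : ℕ) (P : List (ZMod q) → Fin q → ZMod q)
    (l : List (ZMod q)) : Option (ZMod q) :=
  ((List.finRange q).map (fun i => P (lastN s l) i)).find?
    (fun c => !decide ((lastN (n - 1) l ++ [c]) <:+: l))

/-- Fuel-bounded greedy extension. -/
def greedyAux (q s n : ℕ) (P : List (ZMod q) → Fin q → ZMod q) :
    ℕ → List (ZMod q) → List (ZMod q)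
  | 0, l => l
  | f + 1, l =>
    match nextDigit q s n P l with
    | none => l
    | some c => greedyAux q s n P f (l ++ [c])

/-- The greedy sequence `(P, I)`: fuel `q ^ n` provably suffices for the
construction to halt, since every `n`-word occurs at most once. -/
def greedy (q s n : ℕ) (P : List (ZMod q) → Fin q → ZMod q)
    (I : List (ZMod q)) : List (ZMod q) :=
  greedyAux q s n P (q ^ n) I

/-- The number of occurrences of `w` as a length-`n` contiguous window of `l`. -/
def windowCount (q n : ℕ) (w l : List (ZMod q)) : ℕ :=
  ((List.range (l.length + 1 - n)).filter
    (fun i => decide ((l.drop i).take n = w))).length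

/-- `P` is a preference function (of span `s`): it assigns to every `s`-word a
permutation of the alphabet `ZMod q`. -/
def IsPrefFun (q s : ℕ) (P : List (ZMod q) → Fin q → ZMod q) : Prop :=
  ∀ x : List (ZMod q), x.length = s → Function.Bijective (P x)

/-- The `n`-windows of `l` at different positions are different words. -/
def WindowsDistinct {α : Type*} (n : ℕ) (l : List α) : Prop :=
  ∀ i j, i + n ≤ l.length → j + n ≤ l.length →
    (l.drop i).take n = (l.drop j).take n → i = j

theorem infix_of_window {α : Type*} (n i : ℕ) (l : List α) : (l.drop i).take n <:+: l :=
  (List.take_prefix _ _).isInfix.trans (List.drop_suffix _ _).isInfix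

theorem exists_window_of_infix {α : Type*} {w l : List α} (h : w <:+: l) :
    ∃ i, i + w.length ≤ l.length ∧ (l.drop i).take w.length = w := by
  obtain ⟨a, b, rfl⟩ := h
  exact ⟨a.length, by simp, by simp⟩

theorem length_lastN {α : Type*} {k : ℕ} {l : List α} (h : k ≤ l.length) :
    (lastN k l).length = k := by
  simp only [lastN, List.length_drop]; omega

theorem WindowsDistinct.step {α : Type*} {n : ℕ} (hn : 0 < n) {l : List α} (hl : n ≤ l.length)
    (h : WindowsDistinct n l) {c : α} (hc : ¬ (lastN (n - 1) l ++ [c]) <:+: l) :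
    WindowsDistinct n (l ++ [c]) := by
  have old : ∀ i, i + n ≤ l.length → ((l ++ [c]).drop i).take n = (l.drop i).take n := by
    intro i hi
    rw [List.drop_append_of_le_length (by omega),
      List.take_append_of_le_length (by rw [List.length_drop]; omega)]
  have new : ∀ i, i + n = l.length + 1 →
      ((l ++ [c]).drop i).take n = lastN (n - 1) l ++ [c] := by
    intro i hi
    have e : l.length - (n - 1) = i := by omega
    rw [List.drop_append_of_le_length (by omega), lastN, e]
    apply List.take_of_length_le
    simp only [List.length_append, List.length_drop, List.length_singleton]; omega
  intro i j hi hj hij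
  simp only [List.length_append, List.length_singleton] at hi hj
  rcases Nat.lt_or_ge l.length (i + n) with hi' | hi' <;>
    rcases Nat.lt_or_ge l.length (j + n) with hj' | hj'
  · omega
  · rw [new i (by omega), old j hj'] at hij
    exact absurd (hij ▸ infix_of_window n j l) hc
  · rw [old i hi', new j (by omega)] at hij
    exact absurd (hij ▸ infix_of_window n i l) hc
  · rw [old i hi', old j hj'] at hij
    exact h i j hi' hj' hij

/-- There are at most as many windows as words of length `n`. -/
theorem WindowsDistinct.length_le {α : Type*} [Fintype α] {n : ℕ} {l : List α}
    (h : WindowsDistinct n l) : l.length + 1 - n ≤ Fintype.card α ^ n := by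
  have key := Fintype.card_le_of_injective (β := List.Vector α n)
    (fun i : Fin (l.length + 1 - n) =>
      (⟨(l.drop i).take n, by
        have := i.2
        simp only [List.length_take, List.length_drop]; omega⟩ : List.Vector α n)) (by
      intro i j hij
      have hi := i.2
      have hj := j.2
      exact Fin.ext (h i j (by omega) (by omega) (congrArg Subtype.val hij)))
  rwa [card_vector, Fintype.card_fin] at key

theorem WindowsDistinct.windowCount_le_one {q n : ℕ} {l : List (ZMod q)}
    (h : WindowsDistinct n l) (w : List (ZMod q)) : windowCount q n w l ≤ 1 := by
  unfold windowCount
  rw [← List.toFinset_card_of_nodup (List.nodup_range.filter _), Finset.card_le_one]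
  intro i hi j hj
  simp only [List.mem_toFinset, List.mem_filter, List.mem_range, decide_eq_true_eq] at hi hj
  exact h i j (by omega) (by omega) (hi.2.trans hj.2.symm)

theorem not_infix_of_nextDigit {q s n : ℕ} {P : List (ZMod q) → Fin q → ZMod q}
    {l : List (ZMod q)} {c : ZMod q} (h : nextDigit q s n P l = some c) :
    ¬ (lastN (n - 1) l ++ [c]) <:+: l := by
  have := List.find?_some h
  simpa using this

theorem infix_of_nextDigit_none {q s n : ℕ} {P : List (ZMod q) → Fin q → ZMod q}
    (hP : IsPrefFun q s P) {l : List (ZMod q)} (hl : s ≤ l.length)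
    (h : nextDigit q s n P l = none) (c : ZMod q) : (lastN (n - 1) l ++ [c]) <:+: l := by
  obtain ⟨i, rfl⟩ := (hP (lastN s l) (length_lastN hl)).2 c
  have := List.find?_eq_none.1 h (P (lastN s l) i)
    (List.mem_map.2 ⟨i, List.mem_finRange i, rfl⟩)
  simpa using this

/-- The invariants of the construction; it either halts or appends one digit per unit of fuel. -/
theorem greedyAux_spec {q s n : ℕ} {P : List (ZMod q) → Fin q → ZMod q} (hn : 0 < n) :
    ∀ (f : ℕ) (l : List (ZMod q)), n ≤ l.length → WindowsDistinct n l →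
      WindowsDistinct n (greedyAux q s n P f l) ∧ l <+: greedyAux q s n P f l ∧
        (nextDigit q s n P (greedyAux q s n P f l) = none ∨
          (greedyAux q s n P f l).length = l.length + f) := by
  intro f
  induction f with
  | zero => intro l _ h; exact ⟨h, List.prefix_rfl, Or.inr rfl⟩
  | succ f ih =>
    intro l hl h
    rcases hd : nextDigit q s n P l with _ | c
    · simp only [greedyAux, hd]
      exact ⟨h, List.prefix_rfl, Or.inl trivial⟩
    · simp only [greedyAux, hd]
      obtain ⟨h1, h2, h3⟩ := ih (l ++ [c]) (by simp; omega)
        (h.step hn hl (not_infix_of_nextDigit hd))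
      refine ⟨h1, (List.prefix_append _ _).trans h2, h3.imp_right fun e => ?_⟩
      rw [e, List.length_append, List.length_singleton]; omega

/-- Extra fuel has no effect once the construction has halted. -/
theorem greedyAux_stable {q s n : ℕ} {P : List (ZMod q) → Fin q → ZMod q} :
    ∀ (f g : ℕ) (l : List (ZMod q)), f ≤ g →
      nextDigit q s n P (greedyAux q s n P f l) = none →
      greedyAux q s n P g l = greedyAux q s n P f l := by
  intro f
  induction f with
  | zero =>
    intro g l _ h
    change nextDigit q s n P l = none at h
    cases g <;> simp [greedyAux, h]
  | succ f ih =>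
    intro g l hg h
    obtain ⟨g, rfl⟩ : ∃ g', g = g' + 1 := ⟨g - 1, by omega⟩
    rcases hd : nextDigit q s n P l with _ | c
    · simp only [greedyAux, hd]
    · simp only [greedyAux, hd] at h ⊢
      exact ih g _ (by omega) h

/-- If every one-letter extension of the final `(n - 1)`-word `v` of `l` occurs in `l`, then
`l` begins with `v`: otherwise `v` would have too many predecessors. -/
theorem suffix_of_halted {α : Type*} [Fintype α] {n : ℕ} (hn : 0 < n) {l : List α}
    (hl : n ≤ l.length) (h : WindowsDistinct n l)
    (hall : ∀ c, (lastN (n - 1) l ++ [c]) <:+: l) : l.take (n - 1) = lastN (n - 1) l := by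
  have hv : (lastN (n - 1) l).length = n - 1 := length_lastN (by omega)
  have hlast : (l.drop (l.length - n + 1)).take (n - 1) = lastN (n - 1) l := by
    have e : l.length - n + 1 = l.length - (n - 1) := by omega
    rw [e]
    exact List.take_of_length_le hv.le
  have hpos : ∀ c, ∃ i, i + n ≤ l.length ∧ (l.drop i).take n = lastN (n - 1) l ++ [c] := by
    intro c
    have hlen : (lastN (n - 1) l ++ [c]).length = n := by
      rw [List.length_append, hv, List.length_singleton]; omega
    simpa only [hlen] using exists_window_of_infix (hall c)
  choose p hp hpw using hpos
  generalize lastN (n - 1) l = v at *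
  have hpv : ∀ c, (l.drop (p c)).take (n - 1) = v := by
    intro c
    have := congrArg (List.take (n - 1)) (hpw c)
    rwa [List.take_take, Nat.min_eq_left (by omega), ← hv, List.take_left, hv] at this
  by_contra hne
  have hp0 : ∀ c, p c ≠ 0 := by
    intro c h0
    apply hne
    simpa [h0] using hpv c
  -- `r o` is the position just before the occurrence of `v` labelled `o`, where `none` labels
  -- the final occurrence and `some c` the one followed by `c`.
  let r : Option α → ℕ := fun o => o.elim (l.length - n) (fun c => p c - 1)
  have hr : ∀ o, r o + n ≤ l.length := by
    rintro (_ | c)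
    · change l.length - n + n ≤ _; omega
    · change p c - 1 + n ≤ _
      have := hp c
      omega
  have hrv : ∀ o, (l.drop (r o + 1)).take (n - 1) = v := by
    rintro (_ | c)
    · exact hlast
    · change (l.drop (p c - 1 + 1)).take (n - 1) = v
      rw [Nat.sub_add_cancel (Nat.pos_of_ne_zero (hp0 c))]
      exact hpv c
  have hrinj : Function.Injective r := by
    rintro (_ | c) (_ | d) hcd
    · rfl
    · change l.length - n = p d - 1 at hcd
      have := hp d; have := hp0 d; omega
    · change p c - 1 = l.length - n at hcd
      have := hp c; have := hp0 c; omega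
    · change p c - 1 = p d - 1 at hcd
      have := hp0 c
      have := hp0 d
      have e : p c = p d := by omega
      have e2 := (hpw c).symm.trans ((congrArg (fun i => (l.drop i).take n) e).trans (hpw d))
      have e3 : c = d := by simpa using e2
      rw [e3]
  have hlt : ∀ o, r o < l.length := fun o => by have := hr o; omega
  have hw : ∀ o, (l.drop (r o)).take n = l[r o]'(hlt o) :: v := by
    intro o
    obtain ⟨m, rfl⟩ : ∃ m, n = m + 1 := ⟨n - 1, by omega⟩
    rw [List.drop_eq_getElem_cons (hlt o), List.take_succ_cons]
    exact congrArg _ (hrv o)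
  have hb : Function.Injective (fun o => l[r o]'(hlt o)) := by
    intro o o' hoo
    refine hrinj (h _ _ (hr o) (hr o') ?_)
    rw [hw, hw]
    exact congrArg (· :: v) hoo
  have := Fintype.card_le_of_injective _ hb
  rw [Fintype.card_option] at this
  omega

/-- Golomb's lemma for preference functions.
For a preference function `P` of span `s` (`0 ≤ s < n`) and an arbitrary initial
`n`-word `I`, the greedy construction `(P,I)` halts after finitely many steps
(indeed within `q ^ n` steps, after which nothing more can be appended),
every `n`-word occurs at most once as a contiguous window of `(P,I)`,
and `(P,I)` ends with the pattern `(I_1,…,I_{n-1})`. -/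
theorem golomb_lemma (q s n : ℕ) (hq : 2 ≤ q) (hs : s < n)
    (P : List (ZMod q) → Fin q → ZMod q) (hP : IsPrefFun q s P)
    (I : List (ZMod q)) (hI : I.length = n) :
    (∀ f, q ^ n ≤ f → greedyAux q s n P f I = greedy q s n P I) ∧
    nextDigit q s n P (greedy q s n P I) = none ∧
    (∀ w : List (ZMod q), w.length = n → windowCount q n w (greedy q s n P I) ≤ 1) ∧
    I.take (n - 1) <:+ greedy q s n P I := by
  have hn : 0 < n := by omega
  have : NeZero q := ⟨by omega⟩
  have hI0 : WindowsDistinct n I := by intro i j hi hj _; omega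
  obtain ⟨h1, h2, h3⟩ := greedyAux_spec (s := s) (P := P) hn (q ^ n) I hI.ge hI0
  have hlen := h2.length_le
  have hcard := h1.length_le
  rw [ZMod.card] at hcard
  have hhalt : nextDigit q s n P (greedyAux q s n P (q ^ n) I) = none := by
    rcases h3 with h3 | h3
    · exact h3
    · omega
  refine ⟨fun f hf => greedyAux_stable _ _ _ hf hhalt, hhalt,
    fun w _ => h1.windowCount_le_one w, ?_⟩
  have key := suffix_of_halted hn (by omega) h1
    (infix_of_nextDigit_none hP (by omega) hhalt)
  obtain ⟨t, ht⟩ := h2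
  have e : I.take (n - 1) = (greedyAux q s n P (q ^ n) I).take (n - 1) := by
    rw [← ht, List.take_append_of_le_length (by omega)]
  rw [e, key]
  exact List.drop_suffix _ _
end PaperDB
end

section
/- Let q ≥ 2, n ≥ 2, gcd(d,q) = 1, and let o_n = (O,0^n) be the generalized prefer-opposite sequence. For every digit a ∈ A, the digit a does not appear in o_n at any position strictly after the end of the last occurrence of the (n−1)-word a^{n−1} (the digit a repeated n−1 times) as a contiguous window of o_n. -/
/-!
View the `n`-words as the edges `init w → tail w` of the de Bruijn graph on `(n-1)`-words; the
greedy sequence is a trail that starts at the vertex `0^(n-1)`.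

The trail halts at a vertex all of whose out-edges are used, and counting in-edges forces this
vertex to be `0^(n-1)` (`vert_end_eq_start`). Hence the trail is closed, and the *unused* edges
are balanced: each vertex has as many unused out-edges as unused in-edges (`unused_balance`).
Repeating the last digit is the least preferred choice, so a vertex `y0` with an unused out-edge
has `y00` unused, and iterating leads to an unused out-edge at `0^(n-1)`, which is impossible.
So every word ending in `0` is used (`last_ne_zero_of_unused`).

Scale by `d⁻¹`, so that the preference list of `a` is `a+1, …, q-1, 0, 1, …, a`. Since the edge
to `0` is used at each vertex, an unused edge leads from last digit `a` to a digit at most `a`.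
By balance the last and the last-but-one digits of the unused words have equal sums, so these
digits agree in each unused word, and balance propagates this to the left: all unused words are
constant (`unused_const`).

Finally let `a ≠ 0` and look at the last occurrence of `a`, the end of a vertex `v = ya`. If
`v ≠ a^(n-1)`, the edge `va` is used, necessarily earlier; as `a` is the least preferred
successor of `a`, all other out-edges of `v` had been used before it, so the digit after the last
`a` would repeat a window (`exists_block`). For `a = 0` the sequence ends in `0^(n-1)`.
-/

namespace PaperDB

/-- The generalized prefer-opposite preference function `O^{(q,d)}`, of span 1:
`O_j(a) = a + j·d (mod q)` for `j = 1,…,q`; the `Fin q`-index `j` denotes column `j+1`. -/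
def OprefL (q d : ℕ) : List (ZMod q) → Fin q → ZMod q :=
  fun x j => x.headI + (((j : ℕ) + 1 : ℕ) : ZMod q) * (d : ZMod q)

/-- The generalized prefer-opposite sequence `o_n = (O, 0^n)`. -/
def oSeq (q n d : ℕ) : List (ZMod q) :=
  greedy q 1 n (OprefL q d) (List.replicate n 0)

/-! ### Greedy trails in the de Bruijn graph -/

section Core

variable {Z : Type*}

/-- The `(n-1)`-window of `f` starting at `k`, where `n = p + 2`. -/
def vert (p : ℕ) (f : ℕ → Z) (k : ℕ) : Fin (p + 1) → Z := fun t => f (k + t)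

/-- The `n`-window of `f` starting at `k`, where `n = p + 2`. -/
def edge (p : ℕ) (f : ℕ → Z) (k : ℕ) : Fin (p + 2) → Z := fun t => f (k + t)

/-- The `n`-word `w` is not among the first `M` windows of `f`. -/
def Unused (p : ℕ) (f : ℕ → Z) (M : ℕ) (w : Fin (p + 2) → Z) : Prop :=
  ∀ i < M, edge p f i ≠ w

lemma init_edge (p : ℕ) (f : ℕ → Z) (k : ℕ) :
    (Fin.init (edge p f k) : Fin (p + 1) → Z) = vert p f k := by
  ext t; simp [Fin.init, edge, vert]

lemma tail_edge (p : ℕ) (f : ℕ → Z) (k : ℕ) :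
    (Fin.tail (edge p f k) : Fin (p + 1) → Z) = vert p f (k + 1) := by
  ext t; simp [Fin.tail, edge, vert, add_comm, add_left_comm]

lemma edge_last (p : ℕ) (f : ℕ → Z) (k : ℕ) :
    edge p f k (Fin.last (p + 1)) = f (k + p + 1) := by
  simp [edge, add_assoc]

lemma vert_last (p : ℕ) (f : ℕ → Z) (k : ℕ) :
    vert p f k (Fin.last p) = f (k + p) := by
  simp [vert]

lemma eq_snoc_of_init {p : ℕ} {w : Fin (p + 2) → Z} {x : Fin (p + 1) → Z}
    (h : (Fin.init w : Fin (p + 1) → Z) = x) :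
    w = (Fin.snoc x (w (Fin.last (p + 1))) : Fin (p + 2) → Z) := by
  subst h; exact (Fin.snoc_init_self w).symm

/-- Over all words, prefixes and suffixes are equidistributed. -/
lemma sum_init_eq_sum_tail [Fintype Z] (p : ℕ) (φ : (Fin (p + 1) → Z) → ℕ) :
    ∑ w : Fin (p + 2) → Z, φ (Fin.init w) = ∑ w : Fin (p + 2) → Z, φ (Fin.tail w) := by
  have h1 := (Fin.snocEquiv (fun _ : Fin (p + 2) => Z)).sum_comp (fun w => φ (Fin.init w))
  have h2 := (Fin.consEquiv (fun _ : Fin (p + 2) => Z)).sum_comp (fun w => φ (Fin.tail w))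
  rw [← h1, ← h2]
  simp [Fin.snocEquiv, Fin.consEquiv]

variable [Zero Z]

/-- The first `M` windows of length `n = p + 2` of `f` are those of a partial greedy sequence
started at `0^n`; `rk a c` is the position of `c` in the preference list of `a`. -/
structure GreedyInv (p : ℕ) (rk : Z → Z → ℕ) (f : ℕ → Z) (M : ℕ) : Prop where
  pos : 0 < M
  zero : ∀ i < p + 2, f i = 0
  inj : ∀ i < M, ∀ j < M, edge p f i = edge p f j → i = j
  greedy : ∀ k, 0 < k → k < M → ∀ b, rk (f (k + p)) b < rk (f (k + p)) (f (k + p + 1)) →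
    ∃ i < k, edge p f i = Fin.snoc (vert p f k) b

/-- The unused out-edges of a vertex form a final segment of its preference list. -/
lemma unused_of_rk_le {p : ℕ} {rk : Z → Z → ℕ} {f : ℕ → Z} {M : ℕ}
    (h : GreedyInv p rk f M) (hclosed : vert p f M = vert p f 0)
    (halt : ∀ b, ¬ Unused p f M (Fin.snoc (vert p f M) b))
    (rk_inj : ∀ a, Function.Injective (rk a))
    (x : Fin (p + 1) → Z) (b c : Z) (hb : Unused p f M (Fin.snoc x b))
    (hbc : rk (x (Fin.last p)) b ≤ rk (x (Fin.last p)) c) :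
    Unused p f M (Fin.snoc x c) := by
  intro k hk hek
  have hv : vert p f k = x := by rw [← init_edge, hek, Fin.init_snoc]
  have hc : f (k + p + 1) = c := by rw [← edge_last p f, hek, Fin.snoc_last]
  have ha : f (k + p) = x (Fin.last p) := by rw [← vert_last p f, hv]
  rcases Nat.eq_zero_or_pos k with rfl | hk0
  · apply halt b
    rw [hclosed, hv]
    exact hb
  · rcases hbc.lt_or_eq with hlt | heq
    · obtain ⟨i, hi, hie⟩ := h.greedy k hk0 hk b (by rw [ha, hc]; exact hlt)
      rw [hv] at hie
      exact hb i (hi.trans hk) hie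
    · have := rk_inj _ heq
      subst this
      exact hb k hk hek

variable [Fintype Z]

/-- A trail that halts at a vertex all of whose out-edges are used also started there:
otherwise the trail would enter it more often than it has in-edges. -/
lemma vert_end_eq_start {p : ℕ} {rk : Z → Z → ℕ} {f : ℕ → Z} {M : ℕ}
    (h : GreedyInv p rk f M)
    (halt : ∀ b, ¬ Unused p f M (Fin.snoc (vert p f M) b)) :
    vert p f M = vert p f 0 := by
  by_contra hne
  set x := vert p f M with hx
  -- choose, for each digit, the step leaving `x` by it
  have hch : ∀ b, ∃ i, i < M ∧ edge p f i = Fin.snoc x b := by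
    intro b
    have := halt b
    unfold Unused at this
    push Not at this
    exact this
  choose s hs hse using hch
  have hsv : ∀ b, vert p f (s b) = x := by
    intro b
    rw [← init_edge, hse, Fin.init_snoc]
  have hs0 : ∀ b, s b ≠ 0 := by
    intro b hb
    exact hne (by rw [← hsv b, hb])
  -- the `|Z| + 1` times at which `x` is visited: the steps `s b` and the end `M`
  let t : Option Z → ℕ := fun o => o.elim M s
  have ht : Function.Injective t := by
    intro o o' hoo
    match o, o' with
    | none, none => rfl
    | none, some b => exact absurd hoo (by simp only [t, Option.elim]; have := hs b; omega)
    | some b, none => exact absurd hoo (by simp only [t, Option.elim]; have := hs b; omega)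
    | some b, some b' =>
      have h1 : s b = s b' := hoo
      have h2 := hse b
      rw [h1, hse b'] at h2
      have h3 := congrFun h2 (Fin.last (p + 1))
      simp only [Fin.snoc_last] at h3
      rw [h3]
  have htv : ∀ o, vert p f (t o) = x := by
    rintro (_ | b)
    · rfl
    · exact hsv b
  have ht1 : ∀ o, 0 < t o ∧ t o ≤ M := by
    rintro (_ | b)
    · exact ⟨h.pos, le_rfl⟩
    · exact ⟨Nat.pos_of_ne_zero (hs0 b), (hs b).le⟩
  have hinj : Function.Injective (fun o => f (t o - 1)) := by
    intro o o' hoo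
    apply ht
    have := h.inj (t o - 1) (by have := ht1 o; omega) (t o' - 1) (by have := ht1 o'; omega) ?_
    · have h1 := ht1 o
      have h2 := ht1 o'
      omega
    · have key : ∀ o, edge p f (t o - 1) = Fin.cons (f (t o - 1)) x := by
        intro o
        rw [← Fin.cons_self_tail (edge p f (t o - 1)), tail_edge,
          Nat.sub_add_cancel (ht1 o).1, htv]
        simp [edge]
      rw [key, key]
      simp only at hoo
      rw [hoo]
  have := Fintype.card_le_of_injective _ hinj
  simp at this

open Classical in
/-- The unused words are balanced, being the complement of a closed trail in a balanced graph. -/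
lemma unused_balance {p : ℕ} {rk : Z → Z → ℕ} {f : ℕ → Z} {M : ℕ}
    (h : GreedyInv p rk f M) (hclosed : vert p f M = vert p f 0)
    (φ : (Fin (p + 1) → Z) → ℕ) :
    ∑ w ∈ Finset.univ.filter (Unused p f M), φ (Fin.init w) =
      ∑ w ∈ Finset.univ.filter (Unused p f M), φ (Fin.tail w) := by
  have hU : Finset.univ.filter (fun w => ¬ Unused p f M w) =
      (Finset.range M).image (edge p f) := by
    ext w
    simp [Unused]
  have hinj : Set.InjOn (edge p f) (Finset.range M : Set ℕ) := by
    intro i hi j hj hij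
    exact h.inj i (by simpa using hi) j (by simpa using hj) hij
  have hused : ∑ w ∈ Finset.univ.filter (fun w => ¬ Unused p f M w), φ (Fin.init w) =
      ∑ w ∈ Finset.univ.filter (fun w => ¬ Unused p f M w), φ (Fin.tail w) := by
    rw [hU, Finset.sum_image hinj, Finset.sum_image hinj]
    simp only [init_edge, tail_edge]
    have h1 := Finset.sum_range_succ (fun k => φ (vert p f k)) M
    have h2 := Finset.sum_range_succ' (fun k => φ (vert p f k)) M
    rw [hclosed] at h1
    omega
  have hall := sum_init_eq_sum_tail p φ
  have e1 := Finset.sum_filter_add_sum_filter_not Finset.univ (Unused p f M)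
    (fun w => φ (Fin.init w))
  have e2 := Finset.sum_filter_add_sum_filter_not Finset.univ (Unused p f M)
    (fun w => φ (Fin.tail w))
  rw [← e1, ← e2, hused] at hall
  exact Nat.add_right_cancel hall

/-- A vertex has an unused out-edge iff it has an unused in-edge. -/
lemma unused_out_iff_in {p : ℕ} {rk : Z → Z → ℕ} {f : ℕ → Z} {M : ℕ}
    (h : GreedyInv p rk f M) (hclosed : vert p f M = vert p f 0) (x : Fin (p + 1) → Z) :
    (∃ w, Unused p f M w ∧ Fin.init w = x) ↔ (∃ w, Unused p f M w ∧ Fin.tail w = x) := by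
  classical
  have := unused_balance h hclosed (fun y => if y = x then 1 else 0)
  simp only [← Finset.card_filter] at this
  constructor
  · rintro ⟨w, hw, hx⟩
    have hpos : 0 < (Finset.filter (fun w => Fin.tail w = x)
        (Finset.univ.filter (Unused p f M))).card := by
      rw [← this]
      exact Finset.card_pos.2 ⟨w, by simp [hw, hx]⟩
    obtain ⟨w', hw'⟩ := Finset.card_pos.1 hpos
    simp at hw'
    exact ⟨w', hw'⟩
  · rintro ⟨w, hw, hx⟩
    have hpos : 0 < (Finset.filter (fun w => Fin.init w = x)
        (Finset.univ.filter (Unused p f M))).card := by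
      rw [this]
      exact Finset.card_pos.2 ⟨w, by simp [hw, hx]⟩
    obtain ⟨w', hw'⟩ := Finset.card_pos.1 hpos
    simp at hw'
    exact ⟨w', hw'⟩

/-- Every word ending in `0` is used: repeating the last digit is the least preferred choice, so
an unused edge into a vertex ending in `0` would be continued by unused edges to `0^(n-1)`. -/
lemma last_ne_zero_of_unused {p : ℕ} {rk : Z → Z → ℕ} {f : ℕ → Z} {M : ℕ}
    (h : GreedyInv p rk f M) (hclosed : vert p f M = vert p f 0)
    (halt : ∀ b, ¬ Unused p f M (Fin.snoc (vert p f M) b))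
    (rk_inj : ∀ a, Function.Injective (rk a)) (rk_self : ∀ a c, rk a c ≤ rk a a)
    (w : Fin (p + 2) → Z) (hw : Unused p f M w) : w (Fin.last (p + 1)) ≠ 0 := by
  intro hw0
  have hv0 : vert p f 0 = fun _ => 0 := by
    ext t; simp only [vert]; exact h.zero _ (by omega)
  have claim : ∀ i ≤ p, ∃ x : Fin (p + 1) → Z, (∃ w, Unused p f M w ∧ Fin.init w = x) ∧
      ∀ t : Fin (p + 1), p ≤ t + i → x t = 0 := by
    intro i
    induction i with
    | zero =>
      intro _
      refine ⟨Fin.tail w, (unused_out_iff_in h hclosed _).2 ⟨w, hw, rfl⟩, ?_⟩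
      intro t ht
      have : t = Fin.last p := by ext; simp; omega
      subst this
      simpa [Fin.tail] using hw0
    | succ i ih =>
      intro hi
      obtain ⟨x, ⟨w', hw', hx⟩, hxz⟩ := ih (by omega)
      have hl : x (Fin.last p) = 0 := hxz _ (by simp)
      have hu : Unused p f M (Fin.snoc x 0) := by
        refine unused_of_rk_le h hclosed halt rk_inj x (w' (Fin.last (p + 1))) 0 ?_ ?_
        · rw [← eq_snoc_of_init hx]; exact hw'
        · rw [hl]; exact rk_self _ _
      refine ⟨Fin.tail (Fin.snoc x 0 : Fin (p + 2) → Z),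
        (unused_out_iff_in h hclosed _).2 ⟨_, hu, rfl⟩, ?_⟩
      intro t ht
      simp only [Fin.tail]
      rcases Fin.eq_castSucc_or_eq_last t.succ with ⟨s, hs⟩ | hs
      · rw [hs, Fin.snoc_castSucc]
        apply hxz
        have : (t.succ : Fin (p + 2)).val = s.castSucc.val := by rw [hs]
        simp at this
        omega
      · rw [hs, Fin.snoc_last]
  obtain ⟨x, ⟨w', hw', hx⟩, hxz⟩ := claim p le_rfl
  have hx0 : x = vert p f M := by
    rw [hclosed, hv0]; ext t; exact hxz t (by omega)
  apply halt (w' (Fin.last (p + 1)))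
  rw [← hx0, ← eq_snoc_of_init hx]
  exact hw'

/-- Every unused word is constant. -/
lemma unused_const {p : ℕ} {rk : Z → Z → ℕ} {f : ℕ → Z} {M : ℕ}
    (h : GreedyInv p rk f M) (hclosed : vert p f M = vert p f 0)
    (halt : ∀ b, ¬ Unused p f M (Fin.snoc (vert p f M) b))
    (rk_inj : ∀ a, Function.Injective (rk a)) (rk_self : ∀ a c, rk a c ≤ rk a a)
    (ψ : Z → ℕ) (ψ_inj : Function.Injective ψ)
    (ψ_le : ∀ a c, rk a 0 < rk a c → ψ c ≤ ψ a)
    (w : Fin (p + 2) → Z) (hw : Unused p f M w) (t : Fin (p + 2)) :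
    w t = w (Fin.last (p + 1)) := by
  classical
  have hle : ∀ w : Fin (p + 2) → Z, Unused p f M w →
      ψ (w (Fin.last (p + 1))) ≤ ψ ((Fin.init w : Fin (p + 1) → Z) (Fin.last p)) := by
    intro w hw
    apply ψ_le
    by_contra hcon
    have := unused_of_rk_le h hclosed halt rk_inj (Fin.init w) (w (Fin.last (p + 1))) 0
      (by rw [Fin.snoc_init_self]; exact hw) (not_lt.1 hcon)
    exact last_ne_zero_of_unused h hclosed halt rk_inj rk_self _ this (by simp)
  -- the sums of `ψ` over last and last-but-one digits agree, so termwise `≤` is `=`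
  have heq : ∀ w : Fin (p + 2) → Z, Unused p f M w →
      w (Fin.last p).castSucc = w (Fin.last (p + 1)) := by
    have hb := unused_balance h hclosed (fun x => ψ (x (Fin.last p)))
    have := (Finset.sum_eq_sum_iff_of_le (s := Finset.univ.filter (Unused p f M))
      (f := fun w => ψ ((Fin.tail w : Fin (p + 1) → Z) (Fin.last p)))
      (g := fun w => ψ ((Fin.init w : Fin (p + 1) → Z) (Fin.last p)))
      (fun w hw => by simpa [Fin.tail] using hle w (by simpa using hw))).1 hb.symm
    intro w hw
    have := ψ_inj (this w (by simpa using hw))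
    simpa [Fin.tail, Fin.init] using this.symm
  have hstep : ∀ i, ∀ w : Fin (p + 2) → Z, Unused p f M w → ∀ (hi : i ≤ p),
      w ⟨p - i, by omega⟩ = w ⟨p - i + 1, by omega⟩ := by
    intro i
    induction i with
    | zero => intro w hw _; exact heq w hw
    | succ i ih =>
      intro w hw hi
      obtain ⟨w', hw', hx⟩ := (unused_out_iff_in h hclosed (Fin.init w)).1 ⟨w, hw, rfl⟩
      have h1 := ih w' hw' (by omega)
      have h2 := congrFun hx ⟨p - (i + 1), by omega⟩
      have h3 := congrFun hx ⟨p - (i + 1) + 1, by omega⟩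
      simp only [Fin.tail, Fin.init, Fin.succ_mk, Fin.castSucc_mk] at h2 h3
      rw [← h2, ← h3]
      convert h1 using 3 <;> omega
  have hfin : ∀ i (hi : i ≤ p + 1), w ⟨p + 1 - i, by omega⟩ = w (Fin.last (p + 1)) := by
    intro i
    induction i with
    | zero => intro _; rfl
    | succ i ih =>
      intro hi
      rw [← ih (by omega)]
      have := hstep i w hw (by omega)
      convert this using 3 <;> omega
  have := hfin (p + 1 - t) (by omega)
  rw [← this]
  congr 1
  ext
  simp
  omega

/-- Every digit `a = f j` lies at or before the end of some occurrence of `a^(n-1)`: the last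
occurrence of `a` ends one. -/
theorem exists_block {p : ℕ} {rk : Z → Z → ℕ} {f : ℕ → Z} {M : ℕ}
    (h : GreedyInv p rk f M)
    (halt : ∀ b, ¬ Unused p f M (Fin.snoc (vert p f M) b))
    (rk_inj : ∀ a, Function.Injective (rk a)) (rk_self : ∀ a c, rk a c ≤ rk a a)
    (ψ : Z → ℕ) (ψ_inj : Function.Injective ψ)
    (ψ_le : ∀ a c, rk a 0 < rk a c → ψ c ≤ ψ a)
    (j : ℕ) (hj : j < M + p + 1) :
    ∃ k, k ≤ M ∧ vert p f k = (fun _ => f j) ∧ j < k + (p + 1) := by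
  classical
  have hclosed := vert_end_eq_start h halt
  have hv0 : vert p f 0 = fun _ => 0 := by
    ext t; simp only [vert]; exact h.zero _ (by omega)
  by_cases ha : f j = 0
  · exact ⟨M, le_rfl, by rw [hclosed, hv0, ha], by omega⟩
  obtain ⟨J, hJ, hJmax⟩ : ∃ J, (j ≤ J ∧ J < M + p + 1 ∧ f J = f j) ∧
      ∀ J', J < J' → J' < M + p + 1 → f J' ≠ f j := by
    let S := (Finset.range (M + p + 1)).filter (fun i => f i = f j)
    have hjS : j ∈ S := by simp [S, hj]
    refine ⟨S.max' ⟨j, hjS⟩, ⟨S.le_max' j hjS, ?_⟩, ?_⟩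
    · have := S.max'_mem ⟨j, hjS⟩
      simpa [S] using this
    · intro J' h1 h2 h3
      have := S.le_max' J' (by simp [S, h2, h3])
      omega
  obtain ⟨hjJ, hJM, hfJ⟩ := hJ
  have hJp : p + 2 ≤ J := by
    by_contra hlt
    exact ha (by rw [← hfJ]; exact h.zero _ (by omega))
  obtain ⟨k, rfl⟩ : ∃ k, J = k + p := ⟨J - p, by omega⟩
  have hlast : vert p f k (Fin.last p) = f j := by rw [vert_last, hfJ]
  have hkM : k ≠ M := by
    rintro rfl
    rw [hclosed, hv0] at hlast
    exact ha hlast.symm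
  refine ⟨k, by omega, ?_, by omega⟩
  by_contra hne
  have hused : ¬ Unused p f M (Fin.snoc (vert p f k) (f j)) := by
    intro hu
    apply hne
    ext t
    have := unused_const h hclosed halt rk_inj rk_self ψ ψ_inj ψ_le _ hu t.castSucc
    simpa using this
  unfold Unused at hused
  push Not at hused
  obtain ⟨i, hi, hie⟩ := hused
  have hvi : vert p f i = vert p f k := by rw [← init_edge, hie, Fin.init_snoc]
  have hfi : f (i + p + 1) = f j := by rw [← edge_last p f, hie, Fin.snoc_last]
  have hik : i < k := by
    by_contra hcon
    exact hJmax (i + p + 1) (by omega) (by omega) hfi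
  have hi0 : 0 < i := by
    rcases Nat.eq_zero_or_pos i with rfl | h0
    · rw [← hvi, hv0] at hlast
      exact absurd hlast.symm ha
    · exact h0
  have hb : f (k + p + 1) ≠ f j := hJmax _ (by omega) (by omega)
  have hfip : f (i + p) = f j := by rw [← vert_last p f, hvi, hlast]
  -- the edge leaving position `k` was preferred to `a` when `a` was chosen at position `i`
  obtain ⟨i', hi', hie'⟩ := h.greedy i hi0 hi (f (k + p + 1)) (by
    rw [hfip, hfi]
    exact lt_of_le_of_ne (rk_self _ _) (fun he => hb (rk_inj _ he)))
  have hek : edge p f k = Fin.snoc (vert p f k) (f (k + p + 1)) := by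
    rw [← edge_last p f]; exact eq_snoc_of_init (init_edge p f k)
  rw [hvi, ← hek] at hie'
  have := h.inj i' (by omega) k (by omega) hie'
  omega

end Core

/-! ### The prefer-opposite sequence as a greedy trail -/

section Greedy

variable {q p d : ℕ}

/-- The digit at each position of a list, padded with `0`. -/
def digits (l : List (ZMod q)) : ℕ → ZMod q := fun k => l.getD k 0

/-- The position (counted from `0`) of `c` in the prefer-opposite preference list of `a`. -/
def rkO (q d : ℕ) (a c : ZMod q) : ℕ := ((c - a) * (d : ZMod q)⁻¹ - 1).val

lemma rkO_apply [NeZero q] (hd : Nat.Coprime d q) (a : ZMod q) (j : ℕ) (hj : j < q) :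
    rkO q d a (a + ((j + 1 : ℕ) : ZMod q) * d) = j := by
  have hu := ZMod.coe_mul_inv_eq_one d hd
  have : (a + ((j + 1 : ℕ) : ZMod q) * d - a) * (d : ZMod q)⁻¹ - 1 = (j : ZMod q) := by
    push_cast
    linear_combination ((j : ZMod q) + 1) * hu
  rw [rkO, this, ZMod.val_cast_of_lt hj]

lemma apply_rkO [NeZero q] (hd : Nat.Coprime d q) (a c : ZMod q) :
    a + ((rkO q d a c + 1 : ℕ) : ZMod q) * d = c := by
  have hu := ZMod.coe_mul_inv_eq_one d hd
  push_cast
  rw [rkO, ZMod.natCast_zmod_val]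
  linear_combination (c - a) * hu

lemma rkO_injective [NeZero q] (hd : Nat.Coprime d q) (a : ZMod q) :
    Function.Injective (rkO q d a) := by
  intro b c h
  rw [← apply_rkO hd a b, h, apply_rkO hd a c]

lemma rkO_lt [NeZero q] (a c : ZMod q) : rkO q d a c < q := ZMod.val_lt _

lemma rkO_le_self [NeZero q] (a c : ZMod q) : rkO q d a c ≤ rkO q d a a := by
  have h1 := rkO_lt (d := d) a c
  have h2 : rkO q d a a = q - 1 := by
    have hq := NeZero.pos q
    rw [rkO, sub_self, zero_mul, zero_sub]
    have : (-1 : ZMod q) = ((q - 1 : ℕ) : ZMod q) := by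
      rw [Nat.cast_sub hq]; simp
    rw [this, ZMod.val_cast_of_lt (by omega)]
  omega

/-- In units of `d`, only digits at most `a` come after `0` in the preference list of `a`. -/
lemma val_le_of_rkO_lt [NeZero q] (a c : ZMod q) (h : rkO q d a 0 < rkO q d a c) :
    (c * (d : ZMod q)⁻¹).val ≤ (a * (d : ZMod q)⁻¹).val := by
  by_contra hcon
  push Not at hcon
  unfold rkO at h
  rw [sub_mul, sub_mul, zero_mul, zero_sub] at h
  set A := a * (d : ZMod q)⁻¹
  set C := c * (d : ZMod q)⁻¹
  have hA := ZMod.val_lt A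
  have hC := ZMod.val_lt C
  have e1 : -A - 1 = ((q - 1 - A.val : ℕ) : ZMod q) := by
    rw [Nat.cast_sub (by omega), Nat.cast_sub (by omega)]
    simp
    ring
  have e2 : C - A - 1 = ((C.val - A.val - 1 : ℕ) : ZMod q) := by
    rw [Nat.cast_sub (by omega), Nat.cast_sub (by omega)]
    simp
  rw [e1, e2, ZMod.val_cast_of_lt (by omega), ZMod.val_cast_of_lt (by omega)] at h
  omega

/-- The word tested by the greedy rule occurs in `l` iff it is one of the windows of `l`. -/
lemma infix_iff (l : List (ZMod q)) (M : ℕ) (hl : l.length = M + (p + 1)) (c : ZMod q) :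
    (lastN (p + 1) l ++ [c]) <:+: l ↔
      ∃ i < M, edge p (digits l) i = Fin.snoc (vert p (digits l) M) c := by
  have hlen : (lastN (p + 1) l).length = p + 1 := by simp [lastN, hl]
  have hget : ∀ t (ht : t < p + 2), (lastN (p + 1) l ++ [c])[t]'(by simp [hlen]; omega) =
      (Fin.snoc (vert p (digits l) M) c : Fin (p + 2) → ZMod q) ⟨t, ht⟩ := by
    intro t ht
    by_cases h : t < p + 1
    · rw [List.getElem_append_left (by omega)]
      have : (⟨t, ht⟩ : Fin (p + 2)) = (⟨t, h⟩ : Fin (p + 1)).castSucc := rfl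
      rw [this, Fin.snoc_castSucc]
      simp only [lastN, vert, digits, List.getElem_drop, hl, Nat.add_sub_cancel]
      rw [List.getD_eq_getElem]
    · have : (⟨t, ht⟩ : Fin (p + 2)) = Fin.last (p + 1) := by ext; simp; omega
      rw [this, Fin.snoc_last]
      rw [List.getElem_append_right (by omega)]
      simp
  rw [List.infix_iff_getElem?]
  constructor
  · rintro ⟨k, hk, h⟩
    simp only [List.length_append, hlen, List.length_singleton] at hk h
    refine ⟨k, by omega, ?_⟩
    ext t
    have h1 := h t (by omega)
    rw [hget t t.2, List.getElem?_eq_getElem (by omega), Option.some_inj] at h1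
    rw [← h1]
    simp only [edge, digits]
    rw [List.getD_eq_getElem _ _ (by omega)]
    simp only [add_comm]
  · rintro ⟨k, hk, h⟩
    refine ⟨k, by simp [hlen]; omega, ?_⟩
    intro t ht
    simp only [List.length_append, hlen, List.length_singleton] at ht
    rw [hget t ht, ← h, List.getElem?_eq_getElem (by omega)]
    simp only [edge, digits]
    rw [List.getD_eq_getElem _ _ (by omega)]
    simp only [add_comm]

lemma headI_lastN (l : List (ZMod q)) (M : ℕ) (hl : l.length = M + (p + 1)) :
    (lastN 1 l).headI = digits l (M + p) := by
  have h : lastN 1 l = [l[M + p]'(by omega)] := by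
    rw [lastN, List.drop_eq_getElem_cons (by omega)]
    simp only [hl]
    congr 1
    simp
    omega
  rw [h, digits, List.getD_eq_getElem _ _ (by omega)]
  rfl

lemma digits_append_of_lt (l : List (ZMod q)) (c : ZMod q) (k : ℕ) (hk : k < l.length) :
    digits (l ++ [c]) k = digits l k := by
  exact List.getD_append _ _ _ _ hk

lemma digits_append_length (l : List (ZMod q)) (c : ZMod q) :
    digits (l ++ [c]) l.length = c := by
  simp [digits]

lemma edge_append (l : List (ZMod q)) (c : ZMod q) (k : ℕ) (hk : k + (p + 1) < l.length) :
    edge p (digits (l ++ [c])) k = edge p (digits l) k := by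
  ext t; exact digits_append_of_lt _ _ _ (by omega)

lemma vert_append (l : List (ZMod q)) (c : ZMod q) (k : ℕ) (hk : k + p < l.length) :
    vert p (digits (l ++ [c])) k = vert p (digits l) k := by
  ext t; exact digits_append_of_lt _ _ _ (by omega)

lemma greedyInv_step [NeZero q] (hd : Nat.Coprime d q) (l : List (ZMod q)) (M : ℕ)
    (hl : l.length = M + (p + 1)) (h : GreedyInv p (rkO q d) (digits l) M) (c : ZMod q)
    (hc : nextDigit q 1 (p + 2) (OprefL q d) l = some c) :
    GreedyInv p (rkO q d) (digits (l ++ [c])) (M + 1) := by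
  unfold nextDigit at hc
  rw [List.find?_eq_some_iff_getElem] at hc
  obtain ⟨hnew, j, hj, hjc, hpref⟩ := hc
  have hn1 : p + 2 - 1 = p + 1 := rfl
  simp only [List.length_map, List.length_finRange] at hj
  simp only [List.getElem_map, List.getElem_finRange, OprefL, headI_lastN l M hl, hn1,
    Bool.not_not, decide_eq_true_eq, infix_iff l M hl, Bool.not_eq_true',
    decide_eq_false_iff_not, Fin.val_cast] at hnew hjc hpref
  have hedge : edge p (digits (l ++ [c])) M = Fin.snoc (vert p (digits l) M) c := by
    have := eq_snoc_of_init (init_edge p (digits (l ++ [c])) M)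
    rw [this, edge_last, vert_append _ _ _ (by omega)]
    congr 1
    rw [show M + p + 1 = l.length by omega, digits_append_length]
  have hfresh : ∀ i < M, edge p (digits (l ++ [c])) i ≠ edge p (digits (l ++ [c])) M := by
    intro i hi he
    rw [hedge, edge_append _ _ _ (by omega)] at he
    exact hnew ⟨i, hi, he⟩
  refine ⟨by omega, ?_, ?_, ?_⟩
  · intro i hi
    have := h.pos
    rw [digits_append_of_lt _ _ _ (by omega)]
    exact h.zero i hi
  · intro i hi i' hi' he
    rcases Nat.lt_succ_iff_lt_or_eq.1 hi with h1 | rfl <;>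
      rcases Nat.lt_succ_iff_lt_or_eq.1 hi' with h2 | rfl
    · rw [edge_append _ _ _ (by omega), edge_append _ _ _ (by omega)] at he
      exact h.inj i h1 i' h2 he
    · exact absurd he (hfresh i h1)
    · exact absurd he.symm (hfresh i' h2)
    · rfl
  · intro k hk0 hk b hb
    rcases Nat.lt_succ_iff_lt_or_eq.1 hk with h1 | rfl
    · rw [digits_append_of_lt _ _ _ (by omega), digits_append_of_lt _ _ _ (by omega)] at hb
      obtain ⟨i, hi, hie⟩ := h.greedy k hk0 h1 b hb
      refine ⟨i, hi, ?_⟩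
      rw [edge_append _ _ _ (by omega), vert_append _ _ _ (by omega), hie]
    · rw [digits_append_of_lt _ _ _ (by omega), show k + p + 1 = l.length by omega,
        digits_append_length, ← hjc, rkO_apply hd _ _ hj] at hb
      obtain ⟨i, hi, hie⟩ := hpref _ hb
      rw [apply_rkO hd] at hie
      refine ⟨i, hi, ?_⟩
      rw [edge_append _ _ _ (by omega), vert_append _ _ _ (by omega), hie]

/-- When the windows found so far and the remaining fuel together exceed `q ^ n`, the greedy
construction halts for want of a fresh window, not for want of fuel. -/
lemma greedyAux_spec_s6 [NeZero q] (hd : Nat.Coprime d q) (fuel : ℕ) :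
    ∀ (l : List (ZMod q)) (M : ℕ), l.length = M + (p + 1) →
      GreedyInv p (rkO q d) (digits l) M → q ^ (p + 2) < fuel + M →
      ∃ M', (greedyAux q 1 (p + 2) (OprefL q d) fuel l).length = M' + (p + 1) ∧
        GreedyInv p (rkO q d) (digits (greedyAux q 1 (p + 2) (OprefL q d) fuel l)) M' ∧
        nextDigit q 1 (p + 2) (OprefL q d) (greedyAux q 1 (p + 2) (OprefL q d) fuel l) = none := by
  induction fuel with
  | zero =>
    intro l M hl h hM
    exfalso
    have hinj : Function.Injective (fun i : Fin M => edge p (digits l) i) := by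
      intro i j hij
      exact Fin.ext (h.inj i i.2 j j.2 hij)
    have := Fintype.card_le_of_injective _ hinj
    simp [ZMod.card] at this
    omega
  | succ fuel ih =>
    intro l M hl h hM
    rw [greedyAux]
    cases hc : nextDigit q 1 (p + 2) (OprefL q d) l with
    | none => exact ⟨M, hl, h, hc⟩
    | some c =>
      exact ih (l ++ [c]) (M + 1) (by simp [hl]; omega) (greedyInv_step hd l M hl h c hc)
        (by omega)

lemma greedyInv_start : GreedyInv p (rkO q d) (digits (List.replicate (p + 2) (0 : ZMod q))) 1 := by
  refine ⟨one_pos, ?_, by omega, by omega⟩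
  intro i hi
  simp [digits]

end Greedy

/-- In the generalized prefer-opposite sequence `o_n`, the
digit `a` does not appear strictly after the end of the last occurrence of the
`(n-1)`-word `a^{n-1}`: every position `j` carrying the digit `a` satisfies
`j < i + (n-1)` for some occurrence of `a^{n-1}` starting at position `i`. -/
theorem digit_not_after_last_block (q n d : ℕ) (hq : 2 ≤ q) (hn : 2 ≤ n)
    (hd : Nat.Coprime d q) :
    ∀ a : ZMod q, ∀ j, j < (oSeq q n d).length → (oSeq q n d).getD j 0 = a →
      ∃ i, i + (n - 1) ≤ (oSeq q n d).length ∧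
        ((oSeq q n d).drop i).take (n - 1) = List.replicate (n - 1) a ∧
        j < i + (n - 1) := by
  obtain ⟨p, rfl⟩ : ∃ p, n = p + 2 := ⟨n - 2, by omega⟩
  have : NeZero q := ⟨by omega⟩
  intro a j hj hja
  obtain ⟨M, hlen, hinv, hnone⟩ := greedyAux_spec_s6 (p := p) hd (q ^ (p + 2))
    (List.replicate (p + 2) 0) 1 (by simp; omega) greedyInv_start (by omega)
  change (oSeq q (p + 2) d).length = _ at hlen
  change GreedyInv p (rkO q d) (digits (oSeq q (p + 2) d)) M at hinv
  change nextDigit q 1 (p + 2) (OprefL q d) (oSeq q (p + 2) d) = none at hnone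
  generalize oSeq q (p + 2) d = L at *
  have hhalt : ∀ b, ¬ Unused p (digits L) M (Fin.snoc (vert p (digits L) M) b) := by
    intro b hu
    unfold nextDigit at hnone
    rw [List.find?_eq_none] at hnone
    have := hnone b (by
      simp only [List.mem_map, List.mem_finRange, true_and]
      refine ⟨⟨rkO q d (lastN 1 L).headI b, rkO_lt _ _⟩, ?_⟩
      exact apply_rkO hd _ b)
    simp only [Bool.not_eq_true', decide_eq_false_iff_not, not_not,
      show p + 2 - 1 = p + 1 from rfl, infix_iff L M hlen] at this
    obtain ⟨i, hi, hie⟩ := this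
    exact hu i hi hie
  -- `x ↦ x / d`, read in `{0, …, q - 1}`, is the potential that unused edges do not increase
  obtain ⟨k, hk, hkv, hjk⟩ := exists_block hinv hhalt (rkO_injective hd) rkO_le_self
    (fun x => (x * (d : ZMod q)⁻¹).val)
    (by
      intro x y hxy
      have h1 := ZMod.val_injective q hxy
      have hu := ZMod.coe_mul_inv_eq_one d hd
      calc x = x * (d : ZMod q)⁻¹ * d := by linear_combination -x * hu
        _ = y * (d : ZMod q)⁻¹ * d := by rw [h1]
        _ = y := by linear_combination y * hu)
    val_le_of_rkO_lt j (by omega)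
  refine ⟨k, by omega, ?_, by omega⟩
  rw [List.eq_replicate_iff]
  have hl1 : ((L.drop k).take (p + 2 - 1)).length = p + 1 := by simp; omega
  refine ⟨by omega, ?_⟩
  intro b hb
  obtain ⟨t, ht, rfl⟩ := List.getElem_of_mem hb
  have := congrFun hkv ⟨t, by omega⟩
  simp only [vert, digits] at this
  rw [hja, List.getD_eq_getElem _ _ (by omega)] at this
  simpa using this
end PaperDB
end
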